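/- Let G be a finite simple P4-sparse graph. Then car(G) ≤ 3. -/

import Mathlib

open SimpleGraph

/-- A set `S` is cycle convex in `G` if no vertex `w` outside `S` is such that the
subgraph induced by `S ∪ {w}` contains a cycle through `w`. -/
def IsCycleConvex {V : Type*} (G : SimpleGraph V) (S : Set V) : Prop :=
  ∀ w : V, w ∉ S →
    ¬ ∃ c : (G.induce (S ∪ {w})).Walk ⟨w, Set.mem_union_right S rfl⟩
        ⟨w, Set.mem_union_right S rfl⟩, c.IsCycle

/-- The cycle convex hull of `S`: the smallest cycle convex set containing `S`. -/
def cycleHull {V : Type*} (G : SimpleGraph V) (S : Set V) : Set V :=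
  ⋂₀ {T : Set V | S ⊆ T ∧ IsCycleConvex G T}

/-- `S` is Carathéodory independent in the cycle convexity of `G`. -/
def CIndep {V : Type*} (G : SimpleGraph V) (S : Set V) : Prop :=
  ∃ p ∈ cycleHull G S, ∀ a ∈ S, p ∉ cycleHull G (S \ {a})

/-- The Carathéodory number of `G` in the cycle convexity. -/
noncomputable def carNumber {V : Type*} (G : SimpleGraph V) : ℕ :=
  sSup {n : ℕ | ∃ S : Set V, CIndep G S ∧ S.ncard = n}

/-- The four-element set `t` induces a path on four vertices in `G`. -/
def InducesP4 {V : Type*} [DecidableEq V] (G : SimpleGraph V) (t : Finset V) : Prop :=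
  ∃ a b c d : V, ({a, b, c, d} : Finset V) = t ∧
    a ≠ b ∧ a ≠ c ∧ a ≠ d ∧ b ≠ c ∧ b ≠ d ∧ c ≠ d ∧
    G.Adj a b ∧ G.Adj b c ∧ G.Adj c d ∧ ¬ G.Adj a c ∧ ¬ G.Adj a d ∧ ¬ G.Adj b d

/-- `G` is P4-sparse: no set of five vertices contains more than one four-element
subset inducing a P4. -/
def P4Sparse {V : Type*} [DecidableEq V] (G : SimpleGraph V) : Prop :=
  ∀ s : Finset V, s.card = 5 →
    ∀ t₁ t₂ : Finset V, t₁ ⊆ s → t₂ ⊆ s →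
      InducesP4 G t₁ → InducesP4 G t₂ → t₁ = t₂

/-!
A vertex outside a cycle convex set has at most one neighbour in each component of that set, and
a vertex added to an induced path `a b c d` of a P4-sparse graph is adjacent to none of the four
vertices, to all of them, or to `b` and `c` only. Hence, if `H` is convex, connected and has at
least three vertices, then for each component `C` of the complement of `H` that meets the
neighbourhood of `H` some `h ∈ H` is adjacent to all of `C`; adding one vertex `s ∈ C` to `H`
then generates the whole of `C`, one triangle through `h` at a time.

So it suffices to generate such an `H` with two elements of `S`: given `p` in the hull of `S`, the
third generator is an element of `S` in the component of `p` in the complement of `H`. The first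
vertex that `S` generates lies either on a triangle with an edge of `S`, whose ends generate `H`, or
on an induced 4-cycle with three elements of `S`. If the hull of those three misses `p`, it contains
a vertex `h` adjacent to all of the component of `p`. This `h` is equal or adjacent to each vertex
of the 4-cycle, so it lies off the cycle and spans a triangle with an edge of `S` after all.
-/

section

variable {V : Type*} {G : SimpleGraph V}

theorem reachable_induction {P : V → Prop} {x y : V}
    (h : G.Reachable x y) (hx : P x) (step : ∀ a b, G.Adj a b → P a → P b) : P y := by
  rw [reachable_iff_reflTransGen] at h
  induction h with
  | refl => exact hx
  | tail _ hab ih => exact step _ _ hab ih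

theorem exists_isCycle_iff {w : V} :
    (∃ c : G.Walk w w, c.IsCycle) ↔ ∃ x y : ({w}ᶜ : Set V), G.Adj w x ∧ G.Adj w y ∧
      (G.induce {w}ᶜ).Reachable x y ∧ x ≠ y := by
  classical
  constructor
  · rintro ⟨_ | ⟨hwx, p⟩, hc⟩
    · simp at hc
    have hnil : ¬ p.Nil := Walk.not_nil_of_ne hwx.ne'
    have hw : ∀ v ∈ p.dropLast.support, v ∈ ({w}ᶜ : Set V) := by
      rintro v hv rfl
      have hnodup := (Walk.cons_isCycle_iff p hwx).mp hc |>.1.support_nodup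
      rw [← Walk.support_dropLast_concat hnil] at hnodup
      grind
    refine ⟨_, _, hwx, (p.adj_penultimate hnil).symm, (p.dropLast.induce _ hw).reachable, ?_⟩
    simpa [Walk.penultimate_cons_of_not_nil, hnil] using hc.snd_ne_penultimate
  · rintro ⟨x, y, hwx, hwy, hxy, hne⟩
    let f : G.induce {w}ᶜ →g G.deleteEdges {s(w, x.1)} :=
      ⟨(↑), fun {a b} hab => by
        refine G.deleteEdges_adj.mpr ⟨hab, ?_⟩
        grind⟩
    have hreach : (G.deleteEdges {s(w, x.1)}).Reachable w x := by
      have hwy' : (G.deleteEdges {s(w, x.1)}).Adj w y := by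
        grind [deleteEdges_adj]
      exact hwy'.reachable.trans (hxy.symm.map f)
    obtain ⟨u, c, hc, hmem⟩ := adj_and_reachable_delete_edges_iff_exists_cycle.mp ⟨hwx, hreach⟩
    exact ⟨c.rotate w (c.fst_mem_support_of_mem_edges hmem), hc.rotate _⟩

theorem isCycleConvex_iff {S : Set V} :
    IsCycleConvex G S ↔ ∀ w ∉ S, ∀ x y : S, G.Adj w x → G.Adj w y →
      (G.induce S).Reachable x y → x = y := by
  refine forall₂_congr fun w hw => ?_
  rw [exists_isCycle_iff]
  let f : G.induce S →g (G.induce (S ∪ {w})).induce {⟨w, Set.mem_union_right S rfl⟩}ᶜ :=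
    ⟨fun v => ⟨⟨v, Or.inl v.2⟩, fun h => ne_of_mem_of_not_mem v.2 hw (congrArg Subtype.val h)⟩, id⟩
  let g : (G.induce (S ∪ {w})).induce {⟨w, Set.mem_union_right S rfl⟩}ᶜ →g G.induce S :=
    ⟨fun v => ⟨v.1.1, v.1.2.resolve_right fun h => v.2 (Subtype.ext h)⟩, id⟩
  constructor
  · intro h x y hwx hwy hxy
    by_contra hne
    exact h ⟨f x, f y, hwx, hwy, hxy.map f, fun h => hne (congrArg g h)⟩
  · rintro h ⟨x, y, hwx, hwy, hxy, hne⟩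
    exact hne (congrArg f (h (g x) (g y) hwx hwy (hxy.map g)))

theorem IsCycleConvex.eq_of_adj {H : Set V} (hH : IsCycleConvex G H)
    (hconn : (G.induce H).Preconnected) {w x y : V} (hw : w ∉ H) (hx : x ∈ H) (hy : y ∈ H)
    (hwx : G.Adj w x) (hwy : G.Adj w y) : x = y :=
  congrArg Subtype.val
    (isCycleConvex_iff.mp hH w hw ⟨x, hx⟩ ⟨y, hy⟩ hwx hwy (hconn _ _))

theorem IsCycleConvex.mem_of_reachable {S : Set V} (hS : IsCycleConvex G S) {w : V} {x y : S}
    (hwx : G.Adj w x) (hwy : G.Adj w y) (hxy : (G.induce S).Reachable x y) (hne : x ≠ y) :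
    w ∈ S := by
  by_contra hw
  exact hne (isCycleConvex_iff.mp hS w hw x y hwx hwy hxy)

theorem IsCycleConvex.mem_of_triangle {S : Set V} (hS : IsCycleConvex G S) {w x y : V}
    (hx : x ∈ S) (hy : y ∈ S) (hxy : G.Adj x y) (hwx : G.Adj w x) (hwy : G.Adj w y) : w ∈ S :=
  hS.mem_of_reachable (x := ⟨x, hx⟩) (y := ⟨y, hy⟩) hwx hwy (induce_adj.mpr hxy).reachable
    (Subtype.coe_ne_coe.mp hxy.ne)

theorem subset_cycleHull (S : Set V) : S ⊆ cycleHull G S :=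
  Set.subset_sInter fun _ hT => hT.1

theorem cycleHull_subset {S T : Set V} (hST : S ⊆ T) (hT : IsCycleConvex G T) :
    cycleHull G S ⊆ T :=
  Set.sInter_subset_of_mem ⟨hST, hT⟩

theorem isCycleConvex_cycleHull (S : Set V) : IsCycleConvex G (cycleHull G S) := by
  rw [isCycleConvex_iff]
  intro w hw x y hwx hwy hxy
  by_contra hne
  refine hw fun T ⟨hST, hT⟩ => ?_
  have hle := cycleHull_subset hST hT
  exact hT.mem_of_reachable (x := Set.inclusion hle x) (y := Set.inclusion hle y) hwx hwy
    (hxy.map (G.induceHomOfLE hle).toHom) ((Set.inclusion_injective hle).ne hne)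

theorem cycleHull_mono {S T : Set V} (hST : S ⊆ T) : cycleHull G S ⊆ cycleHull G T :=
  cycleHull_subset (hST.trans (subset_cycleHull T)) (isCycleConvex_cycleHull T)

theorem connected_induce_cycleHull {T : Set V} (hT : (G.induce T).Connected) :
    (G.induce (cycleHull G T)).Connected := by
  obtain ⟨t⟩ := hT.nonempty
  have hTH := subset_cycleHull (G := G) T
  let K : Set V :=
    {v | ∃ hv : v ∈ cycleHull G T, (G.induce (cycleHull G T)).Reachable ⟨t, hTH t.2⟩ ⟨v, hv⟩}
  have hKH : K ⊆ cycleHull G T := fun v hv => hv.1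
  have hTK : T ⊆ K := fun v hv => ⟨hTH hv, (hT ⟨t, t.2⟩ ⟨v, hv⟩).map (G.induceHomOfLE hTH).toHom⟩
  have hK : IsCycleConvex G K := by
    rw [isCycleConvex_iff]
    intro w hw x y hwx hwy hxy
    by_contra hne
    have hwH : w ∈ cycleHull G T := (isCycleConvex_cycleHull T).mem_of_reachable
      (x := Set.inclusion hKH x) (y := Set.inclusion hKH y) hwx hwy
      (hxy.map (G.induceHomOfLE hKH).toHom) ((Set.inclusion_injective hKH).ne hne)
    exact hw ⟨hwH, x.2.2.trans (induce_adj.mpr hwx.symm).reachable⟩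
  exact connected_iff_exists_forall_reachable _ |>.mpr
    ⟨⟨t, hTH t.2⟩, fun v => (cycleHull_subset hTK hK v.2).2⟩

theorem mem_cycleHull_setOf_reachable {S : Set V} {p : V} (hp : p ∈ cycleHull G S) :
    p ∈ cycleHull G {s ∈ S | G.Reachable s p} := by
  let H := cycleHull G {s ∈ S | G.Reachable s p}
  let K : Set V := {v | G.Reachable v p → v ∈ H}
  have hK : IsCycleConvex G K := by
    rw [isCycleConvex_iff]
    intro w hw x y hwx hwy hxy
    obtain ⟨hwp, hwH⟩ : G.Reachable w p ∧ w ∉ H := Classical.not_imp.mp hw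
    have hxp : G.Reachable x p := hwx.symm.reachable.trans hwp
    obtain ⟨-, hyH, hxyH⟩ : G.Reachable y p ∧
        ∃ hy : y.1 ∈ H, (G.induce H).Reachable ⟨x, x.2 hxp⟩ ⟨y, hy⟩ := by
      refine reachable_induction hxy
        (P := fun v : K => G.Reachable v p ∧ ∃ hv, (G.induce H).Reachable _ ⟨v, hv⟩)
        ⟨hxp, x.2 hxp, .refl _⟩ ?_
      rintro a b hab ⟨hap, haH, hxa⟩
      have hbp : G.Reachable b p := (induce_adj.mp hab).symm.reachable.trans hap
      exact ⟨hbp, b.2 hbp, hxa.trans (Adj.reachable (G := G.induce H) hab)⟩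
    exact Subtype.ext (congrArg Subtype.val
      (isCycleConvex_iff.mp (isCycleConvex_cycleHull _) w hwH _ _ hwx hwy hxyH) :)
  exact cycleHull_subset (T := K) (fun s hs hsp => subset_cycleHull _ ⟨hs, hsp⟩) hK hp (.refl p)

theorem IsCycleConvex.exists_reachable_compl {H S : Set V} {p : V} (hH : IsCycleConvex G H)
    (hconn : (G.induce H).Preconnected) (hp : p ∈ cycleHull G S) (hpH : p ∉ H) :
    ∃ s : (Hᶜ : Set V), s.1 ∈ S ∧ (G.induce Hᶜ).Reachable s ⟨p, hpH⟩ := by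
  let K : Set V :=
    {v | ∀ hv : v ∉ H, ∃ s : (Hᶜ : Set V), s.1 ∈ S ∧ (G.induce Hᶜ).Reachable s ⟨v, hv⟩}
  have hK : IsCycleConvex G K := by
    rw [isCycleConvex_iff]
    intro w hw x y hwx hwy _
    obtain ⟨hwH, hws⟩ := not_forall.mp hw
    have mem_of_adj (v : K) (hwv : G.Adj w v) : v.1 ∈ H := by
      by_contra hvH
      obtain ⟨s, hs, hsv⟩ := v.2 hvH
      exact hws ⟨s, hs, hsv.trans (induce_adj.mpr hwv.symm).reachable⟩
    exact Subtype.ext (hH.eq_of_adj hconn hwH (mem_of_adj x hwx) (mem_of_adj y hwy) hwx hwy)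
  exact cycleHull_subset (T := K) (fun s hs hsH => ⟨⟨s, hsH⟩, hs, .refl _⟩) hK hp hpH

theorem exists_adj_and_adj_or_adj {H : Set V} (hconn : (G.induce H).Preconnected)
    (hcard : 2 < H.encard) {h : V} (hh : h ∈ H) :
    ∃ m ∈ H, G.Adj h m ∧ ∃ k ∈ H, k ≠ h ∧ k ≠ m ∧ (G.Adj h k ∨ G.Adj m k) := by
  have exists_boundary (A : Set V) (hhA : h ∈ A) (hA : A.encard ≤ 2) :
      ∃ c ∈ A, ∃ d ∈ H, d ∉ A ∧ G.Adj c d := by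
    obtain ⟨e, heH, heA⟩ := Set.not_subset.mp fun hHA =>
      (hcard.trans_le (Set.encard_le_encard hHA)).not_ge hA
    obtain ⟨p⟩ := hconn ⟨h, hh⟩ ⟨e, heH⟩
    obtain ⟨d, -, hd, hd'⟩ := p.exists_boundary_dart {v | v.1 ∈ A} hhA heA
    exact ⟨d.fst, hd, d.snd, d.snd.2, hd', d.adj⟩
  obtain ⟨c, hc, m, hm, -, hcm⟩ := exists_boundary {h} rfl (by simp)
  have hhm : G.Adj h m := Set.mem_singleton_iff.mp hc ▸ hcm
  obtain ⟨c, hc, k, hk, hkhm, hck⟩ := exists_boundary {h, m} (by simp)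
    (Set.encard_pair hhm.ne).le
  simp only [Set.mem_insert_iff, Set.mem_singleton_iff, not_or] at hc hkhm
  refine ⟨m, hm, hhm, k, hk, hkhm.1, hkhm.2, ?_⟩
  obtain rfl | rfl := hc
  exacts [.inl hck, .inr hck]

theorem two_lt_encard_of_mem {A : Set V} {x y z : V} (hx : x ∈ A) (hy : y ∈ A) (hz : z ∈ A)
    (hxy : x ≠ y) (hxz : x ≠ z) (hyz : y ≠ z) : 2 < A.encard :=
  calc (2 : ℕ∞) < 3 := by norm_num
    _ = ({x, y, z} : Set V).encard := (Set.encard_eq_three.mpr ⟨x, y, z, hxy, hxz, hyz, rfl⟩).symm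
    _ ≤ A.encard := Set.encard_le_encard (by simp [Set.insert_subset_iff, hx, hy, hz])

/-- The vertices `a`, `b`, `c`, `d`, in this order, form an induced path of `G`; this is the
ordered form of `InducesP4`. -/
def IsP4 (G : SimpleGraph V) (a b c d : V) : Prop :=
  G.Adj a b ∧ G.Adj b c ∧ G.Adj c d ∧ ¬ G.Adj a c ∧ ¬ G.Adj a d ∧ ¬ G.Adj b d

theorem IsP4.symm {a b c d : V} (h : IsP4 G a b c d) : IsP4 G d c b a := by
  simp_all [IsP4, G.adj_comm]

theorem IsP4.pairwise_ne {a b c d : V} (h : IsP4 G a b c d) :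
    a ≠ b ∧ a ≠ c ∧ a ≠ d ∧ b ≠ c ∧ b ≠ d ∧ c ≠ d := by
  obtain ⟨hab, hbc, hcd, hac, had, hbd⟩ := h
  refine ⟨hab.ne, ?_, ?_, hbc.ne, ?_, hcd.ne⟩
  · rintro rfl; exact had hcd
  · rintro rfl; exact hac hcd.symm
  · rintro rfl; exact had hab

variable [DecidableEq V]

theorem IsP4.inducesP4 {a b c d : V} (h : IsP4 G a b c d) : InducesP4 G {a, b, c, d} := by
  obtain ⟨hab, hac, had, hbc, hbd, hcd⟩ := h.pairwise_ne
  exact ⟨a, b, c, d, rfl, hab, hac, had, hbc, hbd, hcd, h⟩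

section OnePointExtension

variable {a b c d e : V}

theorem P4Sparse.not_isP4_of_subset_insert (hG : P4Sparse G) (h : IsP4 G a b c d)
    (he : e ∉ ({a, b, c, d} : Finset V)) (a' b' c' d' : V)
    (he' : e ∈ ({a', b', c', d'} : Finset V))
    (hsub : ({a', b', c', d'} : Finset V) ⊆ insert e {a, b, c, d}) : ¬ IsP4 G a' b' c' d' := by
  intro h'
  have hcard : (insert e {a, b, c, d} : Finset V).card = 5 := by
    obtain ⟨hab, hac, had, hbc, hbd, hcd⟩ := h.pairwise_ne
    simp_all
  exact he (hG _ hcard _ _ (Finset.subset_insert _ _) hsub h.inducesP4 h'.inducesP4 ▸ he')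

theorem P4Sparse.adj_inner_of_adj_end (hG : P4Sparse G) (h : IsP4 G a b c d)
    (he : e ∉ ({a, b, c, d} : Finset V)) (hea : G.Adj e a) : G.Adj e b := by
  by_contra heb
  have heabc := hG.not_isP4_of_subset_insert h he e a b c (by grind) (by grind)
  have haecd := hG.not_isP4_of_subset_insert h he a e c d (by grind) (by grind)
  have hdeab := hG.not_isP4_of_subset_insert h he d e a b (by grind) (by grind)
  simp_all [IsP4, G.adj_comm]

theorem P4Sparse.adj_inner_of_adj_inner (hG : P4Sparse G) (h : IsP4 G a b c d)
    (he : e ∉ ({a, b, c, d} : Finset V)) (heb : G.Adj e b) : G.Adj e c := by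
  by_contra hec
  have hebcd := hG.not_isP4_of_subset_insert h he e b c d (by grind) (by grind)
  have habed := hG.not_isP4_of_subset_insert h he a b e d (by grind) (by grind)
  have haedc := hG.not_isP4_of_subset_insert h he a e d c (by grind) (by grind)
  have := G.adj_comm
  grind [IsP4]

theorem P4Sparse.adj_end_of_adj_end (hG : P4Sparse G) (h : IsP4 G a b c d)
    (he : e ∉ ({a, b, c, d} : Finset V)) (hea : G.Adj e a) : G.Adj e d := by
  have hec : G.Adj e c := hG.adj_inner_of_adj_inner h he (hG.adj_inner_of_adj_end h he hea)
  by_contra hed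
  have ⟨_, _, hcd, hac, had, _⟩ := h
  have haecd : IsP4 G a e c d := ⟨hea.symm, hec, hcd, hac, had, hed⟩
  exact hG.not_isP4_of_subset_insert h he a e c d (by grind) (by grind) haecd

end OnePointExtension

theorem P4Sparse.eq_or_adj_or_exists_adj (hG : P4Sparse G) {S : Set V} {w : V} (hw : w ∉ S)
    {x y : S} (hwx : G.Adj w x) (hx : ∀ z ∈ S, G.Adj x z → ¬ G.Adj w z)
    (hxy : (G.induce S).Reachable x y) :
    y = x ∨ G.Adj x y ∨ ∃ z ∈ S, G.Adj x z ∧ G.Adj z y := by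
  refine reachable_induction hxy
    (P := fun y : S => y = x ∨ G.Adj x y ∨ ∃ z ∈ S, G.Adj x z ∧ G.Adj z y) (.inl rfl) ?_
  intro c d hcd hc
  have hcd : G.Adj c d := hcd
  by_cases hcx : c = x
  · exact .inr (.inl (hcx ▸ hcd))
  by_cases hxc : G.Adj x c
  · exact .inr (.inr ⟨c, c.2, hxc, hcd⟩)
  obtain ⟨z, hz, hxz, hzc⟩ := (hc.resolve_left hcx).resolve_left hxc
  by_contra! hfar
  have hzd : ¬ G.Adj z d := hfar.2.2 z hz hxz
  have hxzcd : IsP4 G x z c d := ⟨hxz, hzc, hcd, hxc, hfar.2.1, hzd⟩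
  refine hx z hz hxz (hG.adj_inner_of_adj_end hxzcd ?_ hwx)
  grind

theorem P4Sparse.eq_or_adj_of_two_adj (hG : P4Sparse G) {H : Set V}
    (hconn : (G.induce H).Preconnected) {w h v a b : V} (hw : w ∉ H) (hh : h ∈ H)
    (hwh : G.Adj w h) (huniq : ∀ z ∈ H, G.Adj w z → z = h) (hv : v ∈ H) (ha : a ∈ H) (hb : b ∈ H)
    (hab : a ≠ b) (hva : G.Adj v a) (hvb : G.Adj v b) : v = h ∨ G.Adj h v := by
  by_contra! hfar
  obtain ⟨hvh, hhv⟩ := hfar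
  obtain heq | hadj | ⟨m, hm, hhm, hmv⟩ := hG.eq_or_adj_or_exists_adj hw (x := ⟨h, hh⟩)
    (y := ⟨v, hv⟩) hwh (fun z hz hhz hwz => hhz.ne' (huniq z hz hwz)) (hconn _ _)
  · exact hvh (congrArg Subtype.val heq)
  · exact hhv hadj
  have hwhmv : IsP4 G w h m v :=
    ⟨hwh, hhm, hmv, fun hwm => hhm.ne' (huniq m hm hwm), fun hwv => hvh (huniq v hv hwv), hhv⟩
  have eq_of_adj (n : V) (hn : n ∈ H) (hvn : G.Adj v n) : n = m := by
    by_contra hnm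
    have hnh : n ≠ h := by rintro rfl; exact hhv hvn.symm
    refine hnh (huniq n hn (hG.adj_end_of_adj_end hwhmv.symm ?_ hvn.symm).symm)
    grind [hvn.ne]
  exact hab ((eq_of_adj a ha hva).trans (eq_of_adj b hb hvb).symm)

theorem P4Sparse.adj_of_adj_of_adj (hG : P4Sparse G) {H : Set V} (hH : IsCycleConvex G H)
    (hconn : (G.induce H).Preconnected) (hcard : 2 < H.encard) {h w u : V} (hh : h ∈ H)
    (hw : w ∉ H) (hu : u ∉ H) (hwh : G.Adj w h) (hwu : G.Adj w u) : G.Adj u h := by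
  by_contra huh
  have hw_uniq : ∀ z ∈ H, G.Adj w z → z = h := fun z hz hwz =>
    hH.eq_of_adj hconn hw hz hh hwz hwh
  have adj_of_adj_h {m k : V} (hm : m ∈ H) (hhm : G.Adj h m) (hk : k ∈ H) (hkh : k ≠ h)
      (hkm : k ≠ m) (hk' : G.Adj h k ∨ G.Adj m k) : G.Adj u m := by
    by_contra hum
    have huwhm : IsP4 G u w h m :=
      ⟨hwu.symm, hwh, hhm, huh, hum, fun hwm => hhm.ne' (hw_uniq m hm hwm)⟩
    refine hkh (hw_uniq k hk (G.adj_symm ?_))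
    obtain hhk | hmk := hk'
    · exact hG.adj_inner_of_adj_inner huwhm.symm (by grind) hhk.symm
    · exact hG.adj_inner_of_adj_end huwhm (by grind)
        (hG.adj_end_of_adj_end huwhm.symm (by grind) hmk.symm)
  obtain ⟨m, hm, hhm, k, hk, hkh, hkm, hk'⟩ := exists_adj_and_adj_or_adj hconn hcard hh
  have hum : G.Adj u m := adj_of_adj_h hm hhm hk hkh hkm hk'
  have hhk : ¬ G.Adj h k := fun hhk => hkm (hH.eq_of_adj hconn hu hk hm
    (adj_of_adj_h hk hhk hm hhm.ne' hkm.symm (.inl hhm)) hum)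
  have hmk : G.Adj m k := hk'.resolve_left hhk
  have hwhmk : IsP4 G w h m k := ⟨hwh, hhm, hmk, fun hwm => hhm.ne' (hw_uniq m hm hwm),
    fun hwk => hkh (hw_uniq k hk hwk), hhk⟩
  refine huh (hG.adj_inner_of_adj_inner hwhmk.symm ?_ hum)
  grind [hwu.ne]

theorem P4Sparse.adj_of_reachable_compl (hG : P4Sparse G) {H : Set V} (hH : IsCycleConvex G H)
    (hconn : (G.induce H).Preconnected) (hcard : 2 < H.encard) {h : V} (hh : h ∈ H)
    {u v : (Hᶜ : Set V)} (huv : (G.induce Hᶜ).Reachable u v) (huh : G.Adj u h) : G.Adj v h :=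
  reachable_induction huv (P := fun v : (Hᶜ : Set V) => G.Adj v h) huh
    fun a b hab hah => hG.adj_of_adj_of_adj hH hconn hcard hh a.2 b.2 hah hab

theorem P4Sparse.exists_adj_of_reachable (hG : P4Sparse G) {H : Set V} (hH : IsCycleConvex G H)
    (hconn : (G.induce H).Preconnected) (hcard : 2 < H.encard) {t p : V} (ht : t ∈ H)
    (hp : p ∉ H) (htp : G.Reachable t p) : ∃ h ∈ H, G.Adj p h := by
  suffices hclosed : p ∈ H ∨ ∃ h ∈ H, G.Adj p h from hclosed.resolve_left hp
  refine reachable_induction htp (P := fun v => v ∈ H ∨ ∃ h ∈ H, G.Adj v h) (.inl ht) ?_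
  intro a b hab ha
  by_cases haH : a ∈ H
  · exact .inr ⟨a, haH, hab.symm⟩
  refine or_iff_not_imp_left.mpr fun hbH => ?_
  obtain ⟨h, hh, hah⟩ := ha.resolve_left haH
  exact ⟨h, hh, hG.adj_of_adj_of_adj hH hconn hcard hh haH hbH hah hab⟩

theorem P4Sparse.exists_mem_cycleHull_insert (hG : P4Sparse G) {S T : Set V} {t p : V}
    (hT : (G.induce (cycleHull G T)).Preconnected) (hcard : 2 < (cycleHull G T).encard)
    (ht : t ∈ T) (htp : G.Reachable t p) (hp : p ∈ cycleHull G S) (hpT : p ∉ cycleHull G T) :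
    ∃ s ∈ S, s ∉ cycleHull G T ∧ (∃ h ∈ cycleHull G T, G.Adj s h) ∧
      p ∈ cycleHull G (insert s T) := by
  have hH := isCycleConvex_cycleHull (G := G) T
  obtain ⟨s, hs, hsp⟩ := hH.exists_reachable_compl hT hp hpT
  obtain ⟨h, hh, hph⟩ :=
    hG.exists_adj_of_reachable hH hT hcard (subset_cycleHull T ht) hpT htp
  have hsh : G.Adj s h := hG.adj_of_reachable_compl hH hT hcard hh hsp.symm hph
  refine ⟨s, hs, s.2, ⟨h, hh, hsh⟩, ?_⟩
  have hhI : h ∈ cycleHull G (insert s.1 T) := cycleHull_mono (Set.subset_insert _ T) hh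
  refine (reachable_induction hsp
    (P := fun v : ((cycleHull G T)ᶜ : Set V) => G.Adj v h ∧ v.1 ∈ cycleHull G (insert s.1 T))
    ⟨hsh, subset_cycleHull _ (Set.mem_insert _ T)⟩ ?_).2
  rintro a b hab ⟨hah, haI⟩
  have hbh : G.Adj b h := hG.adj_of_adj_of_adj hH hT hcard hh a.2 b.2 hah hab
  exact ⟨hbh, (isCycleConvex_cycleHull _).mem_of_triangle haI hhI hah hab.symm hbh⟩

theorem P4Sparse.exists_mem_cycleHull_of_triangle (hG : P4Sparse G) {S : Set V} {p x y w : V}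
    (hp : p ∈ cycleHull G S) (hxp : G.Reachable x p) (hx : x ∈ S) (hxy : G.Adj x y)
    (hwx : G.Adj w x) (hwy : G.Adj w y) : ∃ s ∈ S, p ∈ cycleHull G {s, x, y} := by
  by_cases hpH : p ∈ cycleHull G {x, y}
  · exact ⟨x, hx, cycleHull_mono (Set.subset_insert _ _) hpH⟩
  have hxH : x ∈ cycleHull G {x, y} := subset_cycleHull _ (by simp)
  have hyH : y ∈ cycleHull G {x, y} := subset_cycleHull _ (by simp)
  have hwH : w ∈ cycleHull G {x, y} :=
    (isCycleConvex_cycleHull _).mem_of_triangle hxH hyH hxy hwx hwy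
  have hconn := connected_induce_cycleHull (induce_pair_connected_of_adj hxy)
  have hcard := two_lt_encard_of_mem hxH hyH hwH hxy.ne hwx.ne' hwy.ne'
  obtain ⟨s, hs, -, -, hps⟩ := hG.exists_mem_cycleHull_insert hconn.preconnected hcard
    (Set.mem_insert x _) hxp hp hpH
  exact ⟨s, hs, hps⟩

theorem P4Sparse.exists_mem_cycleHull_of_square (hG : P4Sparse G) {S : Set V} {p x y z w : V}
    (hp : p ∈ cycleHull G S) (hxp : G.Reachable x p) (hx : x ∈ S) (hz : z ∈ S) (hy : y ∈ S)
    (hxz : G.Adj x z) (hzy : G.Adj z y) (hwx : G.Adj w x) (hwy : G.Adj w y)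
    (hxy_ne : x ≠ y) (hxy : ¬ G.Adj x y) (hwz_ne : w ≠ z) (hwz : ¬ G.Adj w z) :
    ∃ s ∈ S, ∃ t ∈ S, p ∈ cycleHull G {s, x, t} := by
  let H := cycleHull G {x, z, y}
  by_cases hpH : p ∈ H
  · exact ⟨z, hz, y, hy, by rwa [Set.insert_comm]⟩
  have hxH : x ∈ H := subset_cycleHull _ (by simp)
  have hzH : z ∈ H := subset_cycleHull _ (by simp)
  have hyH : y ∈ H := subset_cycleHull _ (by simp)
  have hconn : (G.induce H).Connected := by
    refine connected_induce_cycleHull ?_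
    rw [show ({x, z, y} : Set V) = {x, z} ∪ {z, y} by grind]
    exact induce_union_connected (induce_pair_connected_of_adj hxz).preconnected
      (induce_pair_connected_of_adj hzy).preconnected ⟨z, by simp⟩
  have hH : IsCycleConvex G H := isCycleConvex_cycleHull _
  have hwH : w ∈ H := hH.mem_of_reachable (x := ⟨x, hxH⟩) (y := ⟨y, hyH⟩) hwx hwy
    (hconn _ _) (by simpa using hxy_ne)
  have hcard : 2 < H.encard := two_lt_encard_of_mem hxH hzH hyH hxz.ne hxy_ne hzy.ne
  obtain ⟨s, -, hsH, ⟨h, hh, hsh⟩, -⟩ := hG.exists_mem_cycleHull_insert hconn.preconnected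
    hcard (Set.mem_insert x _) hxp hp hpH
  have hnear {v a b : V} (hv : v ∈ H) (ha : a ∈ H) (hb : b ∈ H) (hab : a ≠ b)
      (hva : G.Adj v a) (hvb : G.Adj v b) : v = h ∨ G.Adj h v :=
    hG.eq_or_adj_of_two_adj hconn.preconnected hsH hh hsh
      (fun c hc hsc => hH.eq_of_adj hconn.preconnected hsH hc hh hsc hsh) hv ha hb hab hva hvb
  have hxh := hnear hxH hzH hwH hwz_ne.symm hxz hwx.symm
  have hyh := hnear hyH hzH hwH hwz_ne.symm hzy.symm hwy.symm
  have hzh := hnear hzH hxH hyH hxy_ne hxz.symm hzy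
  have hwh := hnear hwH hxH hyH hxy_ne hwx hwy
  have hhx : G.Adj h x := by grind [G.adj_comm]
  have hhz : G.Adj h z := by grind [G.adj_comm]
  obtain ⟨s, hs, hps⟩ := hG.exists_mem_cycleHull_of_triangle hp hxp hx hxz hhx hhz
  exact ⟨s, hs, z, hz, hps⟩

theorem P4Sparse.exists_mem_cycleHull_triple (hG : P4Sparse G) {S : Set V} {p : V}
    (hp : p ∈ cycleHull G S) : ∃ x ∈ S, ∃ y ∈ S, ∃ z ∈ S, p ∈ cycleHull G {x, y, z} := by
  let S' : Set V := {s ∈ S | G.Reachable s p}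
  suffices h : ∃ x ∈ S', ∃ y ∈ S', ∃ z ∈ S', p ∈ cycleHull G {x, y, z} by
    obtain ⟨x, hx, y, hy, z, hz, hxyz⟩ := h
    exact ⟨x, hx.1, y, hy.1, z, hz.1, hxyz⟩
  have hp' : p ∈ cycleHull G S' := mem_cycleHull_setOf_reachable hp
  by_cases hpS : p ∈ S'
  · exact ⟨p, hpS, p, hpS, p, hpS, subset_cycleHull _ (by simp)⟩
  have hS' : ¬ IsCycleConvex G S' := fun h => hpS (cycleHull_subset subset_rfl h hp')
  rw [isCycleConvex_iff] at hS'
  push Not at hS'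
  obtain ⟨w, hw, x, y, hwx, hwy, hreach, hne⟩ := hS'
  by_cases htri : ∃ z ∈ S', G.Adj x z ∧ G.Adj w z
  · obtain ⟨z, hz, hxz, hwz⟩ := htri
    obtain ⟨s, hs, hps⟩ := hG.exists_mem_cycleHull_of_triangle hp' x.2.2 x.2 hxz hwx hwz
    exact ⟨s, hs, x, x.2, z, hz, hps⟩
  push Not at htri
  have hxy : ¬ G.Adj x y := fun h => htri y y.2 h hwy
  obtain heq | hadj | ⟨z, hz, hxz, hzy⟩ := hG.eq_or_adj_or_exists_adj hw hwx htri hreach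
  · exact absurd heq.symm hne
  · exact absurd hadj hxy
  · obtain ⟨s, hs, t, ht, hst⟩ := hG.exists_mem_cycleHull_of_square hp' x.2.2 x.2 hz y.2
      hxz hzy hwx hwy (Subtype.coe_ne_coe.mpr hne) hxy (by grind) (htri z hz hxz)
    exact ⟨s, hs, x, x.2, t, ht, hst⟩

/-- Stated with `Set.encard`, since `Set.ncard` is `0` on infinite sets. -/
theorem stmt_11_general (hG : P4Sparse G) {S : Set V} (hS : CIndep G S) : S.encard ≤ 3 := by
  obtain ⟨p, hp, hind⟩ := hS
  obtain ⟨x, hx, y, hy, z, hz, hxyz⟩ := hG.exists_mem_cycleHull_triple hp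
  have hsub : {x, y, z} ⊆ S := by simp [Set.insert_subset_iff, hx, hy, hz]
  have hS : S ⊆ {x, y, z} := by
    by_contra! h
    obtain ⟨a, ha, ha'⟩ := Set.not_subset.mp h
    exact hind a ha (cycleHull_mono (Set.subset_sdiff_singleton hsub ha') hxyz)
  calc S.encard ≤ ({x, y, z} : Set V).encard := Set.encard_le_encard hS
    _ ≤ ({z} : Set V).encard + 1 + 1 := (Set.encard_insert_le _ x).trans <| by
      gcongr; exact Set.encard_insert_le _ y
    _ = 3 := by rw [Set.encard_singleton]; norm_num

end

/-- A finite P4-sparse graph has Caratheodory number at most 3. -/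
theorem stmt_11 {V : Type*} [Fintype V] [DecidableEq V] (G : SimpleGraph V)
    (hG : P4Sparse G) :
    carNumber G ≤ 3 :=
  csSup_le' fun _ ⟨_, hS, hn⟩ => hn ▸ ENat.toNat_le_of_le_natCast (stmt_11_general hG hS)
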